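/- For every ε > 0 there exists a constant C(ε) > 0 with the following property: let p be an odd prime, n ≥ 1 an integer, q := pⁿ, β₁, β₂, β₃ integers coprime to p, and M a real number with 1 ≤ M ≤ q^{1/2−ε}. Suppose γ ∈ ℤ satisfies γβ₂ ≡ β₁ (mod q), and suppose a ∈ ℤ and r ∈ ℕ with gcd(a,r) = 1 satisfy |γ/q − a/r| ≤ 1/r². Then Σ_{β₁,β₂,β₃}(M,q) ≤ C(ε) · (M^{5/2}q^{−1/2} + r^{1/2}M^{3/2}q^{−1/2} + M^{3/2}r^{−1/2} + M) · (rMq)^ε. -/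

import Mathlib

/-- `Σ_{β₁,β₂,β₃}(M,q)`: the number of triples `(x₁,x₂,x₃) ∈ ℤ³` with
`|x₁|,|x₂|,|x₃| ≤ M`, `p ∤ x₁x₂x₃` and `β₁x₁² + β₂x₂² + β₃x₃² ≡ 0 (mod q)`. -/
noncomputable def sigmaCount (p : ℕ) (β₁ β₂ β₃ : ℤ) (M : ℝ) (q : ℕ) : ℕ :=
  Nat.card {x : ℤ × ℤ × ℤ |
    ((|x.1| : ℤ) : ℝ) ≤ M ∧ ((|x.2.1| : ℤ) : ℝ) ≤ M ∧ ((|x.2.2| : ℤ) : ℝ) ≤ M ∧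
    ¬ (p : ℤ) ∣ x.1 * x.2.1 * x.2.2 ∧
    (q : ℤ) ∣ β₁ * x.1 ^ 2 + β₂ * x.2.1 ^ 2 + β₃ * x.2.2 ^ 2}

/-- The divisor bound: `d(n) ≪_δ n ^ δ` for every `δ > 0`. -/
theorem exists_card_divisors_le_rpow (δ : ℝ) (hδ : 0 < δ) :
    ∃ C : ℝ, 1 ≤ C ∧ ∀ n : ℕ, n ≠ 0 → (n.divisors.card : ℝ) ≤ C * (n : ℝ) ^ δ := by
  have ht : 0 < (2 : ℝ) ^ δ - 1 := by
    have := Real.one_lt_rpow (x := 2) (by norm_num) hδ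
    linarith
  set t : ℝ := 2 ^ δ - 1
  set X : ℕ := ⌈(2 : ℝ) ^ (1 / δ)⌉₊
  set B : ℝ := 1 + 1 / t with hB
  have hB1 : 1 ≤ B := by
    have : 0 < 1 / t := by positivity
    linarith
  refine ⟨B ^ X, one_le_pow₀ hB1, fun n hn => ?_⟩
  have key : ∀ p ∈ n.primeFactors, ((n.factorization p + 1 : ℕ) : ℝ) ≤
      (if p < X then B else 1) * ((p : ℝ) ^ δ) ^ n.factorization p := by
    intro p hp
    have hp2 : (2 : ℝ) ≤ p := by exact_mod_cast (Nat.prime_of_mem_primeFactors hp).two_le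
    set e := n.factorization p
    split_ifs with h
    · have hy : 1 + t ≤ (p : ℝ) ^ δ := by
        have := Real.rpow_le_rpow (by norm_num) hp2 hδ.le
        linarith
      have h1 : 1 + (e : ℝ) * t ≤ ((p : ℝ) ^ δ) ^ e :=
        (one_add_mul_le_pow (by linarith) e).trans (pow_le_pow_left₀ (by linarith) hy e)
      have h2 : ((e + 1 : ℕ) : ℝ) ≤ B * (1 + (e : ℝ) * t) := by
        have : B * (1 + (e : ℝ) * t) = 1 + e + (1 / t + e * t) := by
          rw [hB]; field_simp; ring
        rw [this]
        push_cast
        have : 0 ≤ 1 / t + e * t := by positivity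
        linarith
      exact h2.trans (mul_le_mul_of_nonneg_left h1 (by linarith))
    · have hpX : (2 : ℝ) ^ (1 / δ) ≤ p := (Nat.le_ceil _).trans (by exact_mod_cast not_lt.mp h)
      have hy : (2 : ℝ) ≤ (p : ℝ) ^ δ := by
        have := Real.rpow_le_rpow (by positivity) hpX hδ.le
        rwa [← Real.rpow_mul (by norm_num), one_div_mul_cancel hδ.ne', Real.rpow_one] at this
      have h1 : ((e + 1 : ℕ) : ℝ) ≤ 2 ^ e := by exact_mod_cast Nat.lt_two_pow_self
      rw [one_mul]
      exact h1.trans (pow_le_pow_left₀ (by norm_num) hy e)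
  have hnδ : (n : ℝ) ^ δ = ∏ p ∈ n.primeFactors, ((p : ℝ) ^ δ) ^ n.factorization p := by
    conv_lhs => rw [← Nat.prod_factorization_pow_eq_self hn, Finsupp.prod, Nat.cast_prod]
    rw [← Real.finsetProd_rpow _ _ (fun i _ => by positivity)]
    refine Finset.prod_congr (by simp) fun p _ => ?_
    rw [Nat.cast_pow, ← Real.rpow_natCast_mul (by positivity), ← Real.rpow_mul_natCast
      (by positivity), mul_comm]
  rw [Nat.card_divisors hn, Nat.cast_prod, hnδ]
  refine (Finset.prod_le_prod (fun _ _ => by positivity) key).trans ?_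
  rw [Finset.prod_mul_distrib]
  refine mul_le_mul_of_nonneg_right ?_ (Finset.prod_nonneg fun _ _ => by positivity)
  rw [← Finset.prod_filter, Finset.prod_const]
  refine pow_le_pow_right₀ hB1 ?_
  calc _ ≤ (Finset.range X).card := Finset.card_le_card fun p hp => by
        simpa using (Finset.mem_filter.mp hp).2
    _ = X := Finset.card_range X

/-- Pairs `(m, l)` of integers of size at most `L` with `q ∣ γ m + l`. -/
noncomputable def congruencePairs (L : ℕ) (q γ : ℤ) : Finset (ℤ × ℤ) :=
  (Finset.Icc (-(L : ℤ)) L ×ˢ Finset.Icc (-(L : ℤ)) L).filter fun x => q ∣ γ * x.1 + x.2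

theorem card_Icc_ceil_floor_le (x y : ℝ) (h : x ≤ y) :
    ((Finset.Icc ⌈x⌉ ⌊y⌋).card : ℝ) ≤ y - x + 1 := by
  rw [Int.card_Icc]
  rcases le_total 0 (⌊y⌋ + 1 - ⌈x⌉) with h0 | h0
  · have h1 : (((⌊y⌋ + 1 - ⌈x⌉).toNat : ℤ) : ℝ) = ((⌊y⌋ + 1 - ⌈x⌉ : ℤ) : ℝ) := by
      rw [Int.toNat_of_nonneg h0]
    rw [Int.cast_natCast] at h1
    rw [h1]
    push_cast
    linarith [Int.floor_le y, Int.le_ceil x]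
  · rw [Int.toNat_of_nonpos h0]
    push_cast
    linarith

/-- If `a / r` approximates `γ / q`, then `γ m + l ≡ 0 (mod q)` has few small solutions. -/
theorem card_congruencePairs_le (L : ℕ) (q γ : ℤ) (hq : 0 < q) (a : ℤ) (r : ℕ) (hr : 0 < r)
    (hcop : Int.gcd a r = 1)
    (happ : |(γ : ℝ) / q - (a : ℝ) / (r : ℝ)| ≤ 1 / (r : ℝ) ^ 2) :
    ((congruencePairs L q γ).card : ℝ) ≤ (2 * L / r + 2) * (2 * r * L / q + 3) := by
  have hrR : (0 : ℝ) < r := by exact_mod_cast hr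
  have hrZ : (0 : ℤ) < r := by exact_mod_cast hr
  have hqR : (0 : ℝ) < q := by exact_mod_cast hq
  set θ : ℝ := (γ : ℝ) / q - (a : ℝ) / (r : ℝ) with hθ
  set R : ℝ := 1 + r * L / q with hR
  have hR0 : 0 ≤ R := by positivity
  let J : Finset ℤ := Finset.Icc ⌈-(L : ℝ) / r - 1⌉ ⌊(L : ℝ) / r⌋
  let V : ℤ → Finset ℤ := fun j => Finset.Icc ⌈-(r * θ * (j * r)) - R⌉ ⌊-(r * θ * (j * r)) + R⌋
  have hV : ∀ j, ((V j).card : ℝ) ≤ 2 * r * L / q + 3 := by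
    intro j
    refine (card_Icc_ceil_floor_le _ _ (by linarith)).trans (le_of_eq ?_)
    rw [hR]; ring
  have hJ : (J.card : ℝ) ≤ 2 * L / r + 2 := by
    refine (card_Icc_ceil_floor_le _ _ ?_).trans (le_of_eq (by ring))
    have : 0 ≤ (L : ℝ) / r := by positivity
    rw [neg_div]; linarith
  have hcard : (congruencePairs L q γ).card ≤ (J.sigma V).card := by
    refine Finset.card_le_card_of_injOn
      (fun x => (⟨x.1 / r, a * x.1 - (γ * x.1 + x.2) / q * r⟩ : (_ : ℤ) × ℤ)) ?_ ?_
    · rintro ⟨m, l⟩ hx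
      simp only [congruencePairs, Finset.coe_filter, Finset.mem_product, Finset.mem_Icc,
        Set.mem_ofPred_eq] at hx
      obtain ⟨⟨⟨hm1, hm2⟩, hl1, hl2⟩, k, hk⟩ := hx
      have hk' : (γ * m + l) / q = k := by rw [hk, Int.mul_ediv_cancel_left _ hq.ne']
      have hdm := Int.emod_add_mul_ediv m r
      have hj0 := Int.emod_nonneg m hrZ.ne'
      have hj1 := Int.emod_lt_of_pos m hrZ
      set j := m / (r : ℤ) with hj
      set i := m % (r : ℤ) with hi
      have hdmR : (i : ℝ) + r * j = m := by exact_mod_cast hdm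
      have hi0 : (0 : ℝ) ≤ i := by exact_mod_cast hj0
      have hi1 : (i : ℝ) ≤ r := by exact_mod_cast hj1.le
      have hm1R : -(L : ℝ) ≤ m := by exact_mod_cast hm1
      have hm2R : (m : ℝ) ≤ L := by exact_mod_cast hm2
      have hlR : |(l : ℝ)| ≤ L := abs_le.mpr ⟨by exact_mod_cast hl1, by exact_mod_cast hl2⟩
      simp only [Finset.coe_sigma, Set.mem_sigma_iff, Finset.mem_coe, J, V, Finset.mem_Icc,
        Int.ceil_le, Int.le_floor, hk']
      rw [← hj]
      have hkR : (γ : ℝ) * m + l = q * k := by exact_mod_cast hk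
      have hval : (((a * m - k * r : ℤ)) : ℝ) = -(r * θ * (j * r)) - (r * θ * i + r * l / q) := by
        have hl : (l : ℝ) = q * k - γ * m := by linarith
        push_cast
        rw [hl, hθ, ← hdmR]
        field_simp
        ring
      have herr : |r * θ * i + r * l / q| ≤ R := by
        refine (abs_add_le _ _).trans (add_le_add ?_ ?_)
        · rw [abs_mul, abs_mul, abs_of_pos hrR, abs_of_nonneg hi0]
          calc r * |θ| * i ≤ r * (1 / (r : ℝ) ^ 2) * r := by gcongr
            _ = 1 := by field_simp
        · rw [abs_div, abs_mul, abs_of_pos hrR, abs_of_pos hqR]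
          gcongr
      obtain ⟨he1, he2⟩ := abs_le.mp herr
      refine ⟨⟨?_, ?_⟩, ?_, ?_⟩
      · rw [div_sub_one hrR.ne', div_le_iff₀ hrR]; linarith
      · rw [le_div_iff₀ hrR]; linarith
      · rw [hval]; linarith
      · rw [hval]; linarith
    · rintro ⟨m, l⟩ hx ⟨m', l'⟩ hx' heq
      simp only [congruencePairs, Finset.coe_filter, Finset.mem_product, Finset.mem_Icc,
        Set.mem_ofPred_eq] at hx hx'
      obtain ⟨-, k, hk⟩ := hx
      obtain ⟨-, k', hk'⟩ := hx'
      simp only [Sigma.mk.injEq, heq_eq_eq] at heq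
      obtain ⟨h1, h2⟩ := heq
      rw [hk, hk', Int.mul_ediv_cancel_left _ hq.ne', Int.mul_ediv_cancel_left _ hq.ne'] at h2
      have hdvd : (r : ℤ) ∣ a * (m - m') := ⟨k - k', by linarith⟩
      have hdvd' : (r : ℤ) ∣ m - m' :=
        (Int.isCoprime_iff_gcd_eq_one.mpr hcop).symm.dvd_of_dvd_mul_left hdvd
      have hmod : m % r = m' % r := 
        Int.emod_eq_emod_iff_emod_sub_eq_zero.mpr (Int.emod_eq_zero_of_dvd hdvd')
      have hm : m = m' := by
        rw [← Int.emod_add_mul_ediv m r, ← Int.emod_add_mul_ediv m' r, h1, hmod]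
      subst hm
      have hkk : k = k' := by
        have : k * r = k' * r := by linarith
        exact mul_right_cancel₀ hrZ.ne' this
      subst hkk
      simp only [Prod.mk.injEq, true_and]
      linarith
  calc ((congruencePairs L q γ).card : ℝ) ≤ ((J.sigma V).card : ℝ) := by exact_mod_cast hcard
    _ = ∑ j ∈ J, ((V j).card : ℝ) := by rw [Finset.card_sigma]; push_cast; rfl
    _ ≤ ∑ _j ∈ J, (2 * r * L / q + 3 : ℝ) := Finset.sum_le_sum fun j _ => hV j
    _ = J.card * (2 * r * L / q + 3 : ℝ) := by rw [Finset.sum_const, nsmul_eq_mul]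
    _ ≤ _ := mul_le_mul_of_nonneg_right hJ (by positivity)

/-- Triples in the box `[-N, N]³` with `q ∣ β₁x₁² + β₂x₂² + β₃x₃²`. -/
noncomputable def solutionTriples (N : ℕ) (q β₁ β₂ β₃ : ℤ) : Finset (ℤ × ℤ × ℤ) :=
  (Finset.Icc (-(N : ℤ)) N ×ˢ Finset.Icc (-(N : ℤ)) N ×ˢ Finset.Icc (-(N : ℤ)) N).filter
    fun x => q ∣ β₁ * x.1 ^ 2 + β₂ * x.2.1 ^ 2 + β₃ * x.2.2 ^ 2

theorem mem_solutionTriples {N : ℕ} {q β₁ β₂ β₃ : ℤ} {x : ℤ × ℤ × ℤ} :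
    x ∈ solutionTriples N q β₁ β₂ β₃ ↔
      |x.1| ≤ N ∧ |x.2.1| ≤ N ∧ |x.2.2| ≤ N ∧
        q ∣ β₁ * x.1 ^ 2 + β₂ * x.2.1 ^ 2 + β₃ * x.2.2 ^ 2 := by
  simp only [solutionTriples, Finset.mem_filter, Finset.mem_product, Finset.mem_Icc, abs_le]
  tauto

/-- Cauchy–Schwarz over the fibres of a map. -/
theorem sq_card_le_card_mul_card_filter_eq {α β : Type*} [DecidableEq β] (s : Finset α)
    (t : Finset β) (f : α → β) (h : ∀ x ∈ s, f x ∈ t) :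
    s.card ^ 2 ≤ t.card * ((s ×ˢ s).filter fun x => f x.1 = f x.2).card := by
  have h1 : s.card = ∑ b ∈ t, (s.filter fun x => f x = b).card :=
    Finset.card_eq_sum_card_fiberwise h
  have h2 : ((s ×ˢ s).filter fun x => f x.1 = f x.2).card =
      ∑ b ∈ t, (s.filter fun x => f x = b).card ^ 2 := by
    rw [Finset.card_eq_sum_card_fiberwise (f := fun x => f x.1) (t := t)
      (fun x hx => h _ (Finset.mem_product.mp (Finset.mem_filter.mp hx).1).1)]
    refine Finset.sum_congr rfl fun b _ => ?_
    rw [sq, ← Finset.card_product]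
    congr 1
    ext x
    simp only [Finset.mem_filter, Finset.mem_product]
    constructor
    · rintro ⟨⟨⟨h1, h2⟩, h3⟩, h4⟩
      exact ⟨⟨h1, h4⟩, h2, h3 ▸ h4⟩
    · rintro ⟨⟨h1, h2⟩, h3, h4⟩
      exact ⟨⟨⟨h1, h3⟩, h2.trans h4.symm⟩, h2⟩
  rw [h2]
  conv_lhs => rw [h1]
  exact sq_sum_le_card_mul_sum_sq

theorem abs_sq_sub_sq_le {N : ℕ} {x y : ℤ} (hx : |x| ≤ N) (hy : |y| ≤ N) :
    |x ^ 2 - y ^ 2| ≤ (N : ℤ) ^ 2 := by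
  have hx2 := sq_le_sq' (abs_le.mp hx).1 (abs_le.mp hx).2
  have hy2 := sq_le_sq' (abs_le.mp hy).1 (abs_le.mp hy).2
  rw [abs_le]
  constructor <;> nlinarith [sq_nonneg x, sq_nonneg y]

theorem eq_of_sq_sub_sq_eq {x y x' y' : ℤ} (h0 : x ^ 2 - y ^ 2 ≠ 0)
    (h : x ^ 2 - y ^ 2 = x' ^ 2 - y' ^ 2) (habs : (x - y).natAbs = (x' - y').natAbs)
    (hsign : (0 < x - y) ↔ (0 < x' - y')) : x = x' ∧ y = y' := by
  have hd : x - y = x' - y' := by omega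
  have hne : x - y ≠ 0 := fun h' => h0 (by linear_combination (x + y) * h')
  have hs : x + y = x' + y' := by
    refine mul_left_cancel₀ hne ?_
    linear_combination h - (x' + y') * hd
  constructor <;> omega

theorem eq_of_sq_eq_of_nonneg_iff {x y : ℤ} (h : x ^ 2 = y ^ 2) (hsign : (0 ≤ x) ↔ (0 ≤ y)) :
    x = y := by
  rcases sq_eq_sq_iff_eq_or_eq_neg.mp h with h | h <;> omega

/-- Second-moment bound for the number of solutions: only the trivial coincidences
`x₁ = ± y₁`, `x₂ = ± y₂` and the pairs counted by `congruencePairs` contribute. -/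
theorem sq_card_solutionTriples_le (N : ℕ) (q β₁ β₂ β₃ γ : ℤ) (hNq : (N : ℤ) ^ 2 < q)
    (h₁ : IsCoprime q β₁) (h₂ : IsCoprime q β₂) (h₃ : IsCoprime q β₃)
    (hγ : q ∣ γ * β₂ - β₁) (K : ℕ) (hK : ∀ k : ℕ, k ≠ 0 → k ≤ N ^ 2 → k.divisors.card ≤ K) :
    (solutionTriples N q β₁ β₂ β₃).card ^ 2 ≤ (2 * N + 1) *
      (4 * (solutionTriples N q β₁ β₂ β₃).card +
        8 * K ^ 2 * (congruencePairs (N ^ 2) q γ).card) := by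
  classical
  set A := solutionTriples N q β₁ β₂ β₃
  have hCS := sq_card_le_card_mul_card_filter_eq A (Finset.Icc (-(N : ℤ)) N)
    (fun x => x.2.2) (fun x hx => by
      rw [Finset.mem_Icc, ← abs_le]
      exact (mem_solutionTriples.mp hx).2.2.1)
  have hI : (Finset.Icc (-(N : ℤ)) N).card = 2 * N + 1 := by
    rw [Int.card_Icc]; omega
  rw [hI] at hCS
  refine hCS.trans (Nat.mul_le_mul_left _ ?_)
  set B := (A ×ˢ A).filter fun x => x.1.2.2 = x.2.2.2 with hB
  have hBmem : ∀ x ∈ B, (x.1 ∈ A ∧ x.2 ∈ A) ∧ x.1.2.2 = x.2.2.2 := fun x hx => by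
    simpa [hB] using hx
  have hzero : ∀ z : ℤ, |z| ≤ (N : ℤ) ^ 2 → q ∣ z → z = 0 := fun z hz hd =>
    Int.eq_zero_of_abs_lt_dvd hd (hz.trans_lt hNq)
  have hdvdB : ∀ x ∈ B, q ∣ β₁ * (x.1.1 ^ 2 - x.2.1 ^ 2) + β₂ * (x.1.2.1 ^ 2 - x.2.2.1 ^ 2) := by
    intro x hx
    obtain ⟨⟨hx1, hx2⟩, h3⟩ := hBmem x hx
    have hd := Int.dvd_sub (mem_solutionTriples.mp hx1).2.2.2 (mem_solutionTriples.mp hx2).2.2.2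
    rw [h3] at hd
    convert hd using 1
    ring
  have hmB : ∀ x ∈ B, |x.1.1 ^ 2 - x.2.1 ^ 2| ≤ (N : ℤ) ^ 2 := fun x hx =>
    abs_sq_sub_sq_le (mem_solutionTriples.mp (hBmem x hx).1.1).1
      (mem_solutionTriples.mp (hBmem x hx).1.2).1
  have hlB : ∀ x ∈ B, |x.1.2.1 ^ 2 - x.2.2.1 ^ 2| ≤ (N : ℤ) ^ 2 := fun x hx =>
    abs_sq_sub_sq_le (mem_solutionTriples.mp (hBmem x hx).1.1).2.1
      (mem_solutionTriples.mp (hBmem x hx).1.2).2.1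
  have hiff : ∀ x ∈ B, x.1.1 ^ 2 - x.2.1 ^ 2 = 0 ↔ x.1.2.1 ^ 2 - x.2.2.1 ^ 2 = 0 := by
    intro x hx
    have hd := hdvdB x hx
    constructor
    · intro h
      rw [h, mul_zero, zero_add] at hd
      exact hzero _ (hlB x hx) (h₂.dvd_of_dvd_mul_left hd)
    · intro h
      rw [h, mul_zero, add_zero] at hd
      exact hzero _ (hmB x hx) (h₁.dvd_of_dvd_mul_left hd)
  rw [← Finset.card_filter_add_card_filter_not (s := B) (fun x => x.1.1 ^ 2 - x.2.1 ^ 2 = 0)]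
  refine add_le_add ?_ ?_
  · refine Finset.card_le_mul_card_image_of_maps_to (f := Prod.fst) (fun x hx =>
      (hBmem x (Finset.mem_filter.mp hx).1).1.1) 4 fun b _ => ?_
    have hsub : ((B.filter fun x => x.1.1 ^ 2 - x.2.1 ^ 2 = 0).filter fun x => x.1 = b) ⊆
        ({b.1, -b.1} ×ˢ ({b.2.1, -b.2.1} : Finset ℤ)).image fun y => (b, y.1, y.2, b.2.2) := by
      rintro ⟨x, y⟩ hx
      simp only [Finset.mem_filter] at hx
      obtain ⟨⟨hxB, h0⟩, rfl⟩ := hx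
      have h0' := (hiff _ hxB).mp h0
      have h3 := (hBmem _ hxB).2
      simp only at h0' h3
      have e1 := sq_eq_sq_iff_eq_or_eq_neg.mp (sub_eq_zero.mp h0).symm
      have e2 := sq_eq_sq_iff_eq_or_eq_neg.mp (sub_eq_zero.mp h0').symm
      refine Finset.mem_image.mpr ⟨(y.1, y.2.1), ?_, ?_⟩
      · simpa using ⟨e1, e2⟩
      · simp [h3]
    refine (Finset.card_le_card hsub).trans (Finset.card_image_le.trans ?_)
    rw [Finset.card_product]
    exact Nat.mul_le_mul Finset.card_le_two Finset.card_le_two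
  · refine Finset.card_le_mul_card_image_of_maps_to
      (f := fun x => (x.1.1 ^ 2 - x.2.1 ^ 2, x.1.2.1 ^ 2 - x.2.2.1 ^ 2)) (fun x hx => ?_) _
      fun b _ => ?_
    · have hxB := (Finset.mem_filter.mp hx).1
      have hm := abs_le.mp (hmB x hxB)
      have hl := abs_le.mp (hlB x hxB)
      simp only [congruencePairs, Finset.mem_filter, Finset.mem_product, Finset.mem_Icc]
      refine ⟨⟨by exact_mod_cast hm, by exact_mod_cast hl⟩, ?_⟩
      refine h₂.dvd_of_dvd_mul_left ?_
      have := dvd_add (hdvdB x hxB) (hγ.mul_right (x.1.1 ^ 2 - x.2.1 ^ 2))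
      convert this using 1
      ring
    · obtain ⟨m, l⟩ := b
      rcases Finset.eq_empty_or_nonempty ((B.filter fun x => ¬ x.1.1 ^ 2 - x.2.1 ^ 2 = 0).filter
        fun x => (x.1.1 ^ 2 - x.2.1 ^ 2, x.1.2.1 ^ 2 - x.2.2.1 ^ 2) = (m, l)) with he | ⟨w, hw⟩
      · rw [he]; simp
      simp only [Finset.mem_filter, Prod.mk.injEq] at hw
      obtain ⟨⟨hwB, hw0⟩, hwm, hwl⟩ := hw
      have hm0 : m ≠ 0 := hwm ▸ hw0
      have hl0 : l ≠ 0 := hwl ▸ fun h => hw0 ((hiff w hwB).mpr h)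
      have hmN : m.natAbs ≤ N ^ 2 := by
        have := hmB w hwB
        rw [hwm, Int.abs_eq_natAbs] at this
        exact_mod_cast this
      have hlN : l.natAbs ≤ N ^ 2 := by
        have := hlB w hwB
        rw [hwl, Int.abs_eq_natAbs] at this
        exact_mod_cast this
      let T : Finset ((ℕ × Bool) × (ℕ × Bool) × Bool) :=
        (m.natAbs.divisors ×ˢ Finset.univ) ×ˢ (l.natAbs.divisors ×ˢ Finset.univ) ×ˢ Finset.univ
      have hT : T.card ≤ 8 * K ^ 2 := by
        have h1 := hK _ (Int.natAbs_ne_zero.mpr hm0) hmN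
        have h2 := hK _ (Int.natAbs_ne_zero.mpr hl0) hlN
        calc T.card = 8 * (m.natAbs.divisors.card * l.natAbs.divisors.card) := by
              simp only [T, Finset.card_product, Finset.card_univ, Fintype.card_bool]; ring
          _ ≤ 8 * (K * K) := by gcongr
          _ = _ := by ring
      refine le_trans ?_ hT
      refine Finset.card_le_card_of_injOn (fun x =>
        (((x.1.1 - x.2.1).natAbs, decide (0 < x.1.1 - x.2.1)),
          ((x.1.2.1 - x.2.2.1).natAbs, decide (0 < x.1.2.1 - x.2.2.1)),
          decide (0 ≤ x.1.2.2))) ?_ ?_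
      · intro x hx
        simp only [Finset.coe_filter, Finset.mem_filter, Set.mem_ofPred_eq, Prod.mk.injEq] at hx
        obtain ⟨-, rfl, rfl⟩ := hx
        simp only [T, Finset.mem_coe, Finset.mem_product, Finset.mem_univ, and_true,
          Nat.mem_divisors, Int.natAbs_dvd_natAbs, ne_eq, Int.natAbs_eq_zero]
        exact ⟨⟨sub_dvd_pow_sub_pow _ _ 2, hm0⟩, sub_dvd_pow_sub_pow _ _ 2, hl0⟩
      · rintro ⟨⟨x₁, x₂, x₃⟩, y₁, y₂, y₃⟩ hx ⟨⟨x₁', x₂', x₃'⟩, y₁', y₂', y₃'⟩ hx' heq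
        simp only [Finset.coe_filter, Finset.mem_filter, Set.mem_ofPred_eq, Prod.mk.injEq] at hx hx'
        simp only [Prod.mk.injEq, decide_eq_decide] at heq
        obtain ⟨⟨hxB, -⟩, hm, hl⟩ := hx
        obtain ⟨⟨hxB', -⟩, hm', hl'⟩ := hx'
        obtain ⟨⟨e1, e2⟩, ⟨e3, e4⟩, e5⟩ := heq
        obtain ⟨rfl, rfl⟩ := eq_of_sq_sub_sq_eq (hm ▸ hm0) (hm.trans hm'.symm) e1 e2
        obtain ⟨rfl, rfl⟩ := eq_of_sq_sub_sq_eq (hl ▸ hl0) (hl.trans hl'.symm) e3 e4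
        obtain ⟨⟨hxA, -⟩, h3⟩ := hBmem _ hxB
        obtain ⟨⟨hxA', -⟩, h3'⟩ := hBmem _ hxB'
        have hA1 := mem_solutionTriples.mp hxA
        have hA2 := mem_solutionTriples.mp hxA'
        have hd := Int.dvd_sub hA1.2.2.2 hA2.2.2.2
        have hd' : q ∣ β₃ * (x₃ ^ 2 - x₃' ^ 2) := by
          convert hd using 1
          ring
        have hsq := hzero _ (abs_sq_sub_sq_le hA1.2.2.1 hA2.2.2.1) (h₃.dvd_of_dvd_mul_left hd')
        have h33 := eq_of_sq_eq_of_nonneg_iff (sub_eq_zero.mp hsq) e5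
        simp only at h3 h3' h33
        subst h3 h3' h33
        rfl

theorem sigmaCount_le_card_solutionTriples (p : ℕ) (β₁ β₂ β₃ : ℤ) (M : ℝ) (hM : 0 ≤ M) (q : ℕ) :
    sigmaCount p β₁ β₂ β₃ M q ≤ (solutionTriples ⌊M⌋₊ q β₁ β₂ β₃).card := by
  have habs : ∀ z : ℤ, ((|z| : ℤ) : ℝ) ≤ M → |z| ≤ (⌊M⌋₊ : ℤ) := by
    intro z hz
    rw [Int.natCast_floor_eq_floor hM]
    exact Int.le_floor.mpr hz
  rw [sigmaCount, Nat.card_coe_set_eq, ← Set.ncard_coe_finset]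
  refine Set.ncard_le_ncard (fun x hx => ?_) (Finset.finite_toSet _)
  obtain ⟨h1, h2, h3, -, h4⟩ := hx
  exact mem_solutionTriples.mpr ⟨habs _ h1, habs _ h2, habs _ h3, h4⟩

theorem le_of_sq_le_linear_add_sq {S Z : ℝ} (hZ : 0 < Z)
    (h : S ^ 2 ≤ 12 * Z * S + 144 * Z ^ 2) : S ≤ 24 * Z := by
  by_contra! hlt
  nlinarith [mul_pos hZ (sub_pos.mpr hlt), sq_nonneg (S - 24 * Z), sq_pos_of_pos hZ]

/-- The off-diagonal second-moment term is at most the square of the final bound. -/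
theorem second_moment_main_le_sq {M r q : ℝ} (hM : 1 ≤ M) (hr : 0 < r) (hq : 0 < q) :
    M * ((M ^ 2 / r + 1) * (r * M ^ 2 / q + 1)) ≤
      (M ^ ((5 : ℝ) / 2) / q ^ ((1 : ℝ) / 2) + r ^ ((1 : ℝ) / 2) * M ^ ((3 : ℝ) / 2) /
        q ^ ((1 : ℝ) / 2) + M ^ ((3 : ℝ) / 2) / r ^ ((1 : ℝ) / 2) + M) ^ 2 := by
  have hM0 : 0 ≤ M := by linarith
  have hsq : ∀ x k : ℝ, 0 ≤ x → (x ^ (k / 2)) ^ 2 = x ^ k := fun x k hx => by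
    rw [← Real.rpow_mul_natCast hx]; congr 1; push_cast; ring
  set A := M ^ ((5 : ℝ) / 2) / q ^ ((1 : ℝ) / 2) with hA
  set B := r ^ ((1 : ℝ) / 2) * M ^ ((3 : ℝ) / 2) / q ^ ((1 : ℝ) / 2) with hB
  set C := M ^ ((3 : ℝ) / 2) / r ^ ((1 : ℝ) / 2) with hC
  have hA2 : A ^ 2 = M ^ 5 / q := by
    rw [hA, div_pow, hsq _ _ hM0, hsq _ _ hq.le, Real.rpow_one]; norm_cast
  have hB2 : B ^ 2 = r * M ^ 3 / q := by
    rw [hB, div_pow, mul_pow, hsq _ _ hM0, hsq _ _ hq.le, hsq _ _ hr.le, Real.rpow_one,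
      Real.rpow_one]
    norm_cast
  have hC2 : C ^ 2 = M ^ 3 / r := by
    rw [hC, div_pow, hsq _ _ hM0, hsq _ _ hr.le, Real.rpow_one]; norm_cast
  have hA0 : 0 ≤ A := by positivity
  have hB0 : 0 ≤ B := by positivity
  have hC0 : 0 ≤ C := by positivity
  calc M * ((M ^ 2 / r + 1) * (r * M ^ 2 / q + 1)) = A ^ 2 + B ^ 2 + C ^ 2 + M := by
        rw [hA2, hB2, hC2]; field_simp; ring
    _ ≤ A ^ 2 + B ^ 2 + C ^ 2 + M ^ 2 := by nlinarith
    _ ≤ (A + B + C + M) ^ 2 := by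
        have : 0 ≤ A * B + A * C + A * M + B * C + B * M + C * M := by positivity
        nlinarith

/-- A bound for `Σ_{β₁,β₂,β₃}(M,q)` in terms of a rational approximation
`a/r` to `β₁β₂⁻¹/q`. -/
theorem sigma_bound_rational_approximation (ε : ℝ) (hε : 0 < ε) :
    ∃ Cε : ℝ, 0 < Cε ∧
      ∀ (p : ℕ), p.Prime → Odd p → ∀ (n : ℕ), 1 ≤ n → ∀ (β₁ β₂ β₃ : ℤ),
        ¬ (p : ℤ) ∣ β₁ → ¬ (p : ℤ) ∣ β₂ → ¬ (p : ℤ) ∣ β₃ →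
        ∀ M : ℝ, 1 ≤ M → M ≤ ((p : ℝ) ^ n) ^ ((1 : ℝ) / 2 - ε) →
        ∀ γ : ℤ, ((p : ℤ) ^ n ∣ γ * β₂ - β₁) →
        ∀ (a : ℤ) (r : ℕ), 0 < r → Int.gcd a r = 1 →
          |(γ : ℝ) / (p : ℝ) ^ n - (a : ℝ) / (r : ℝ)| ≤ 1 / (r : ℝ) ^ 2 →
          (sigmaCount p β₁ β₂ β₃ M (p ^ n) : ℝ) ≤
            Cε * (M ^ ((5 : ℝ) / 2) / ((p : ℝ) ^ n) ^ ((1 : ℝ) / 2) +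
              (r : ℝ) ^ ((1 : ℝ) / 2) * M ^ ((3 : ℝ) / 2) / ((p : ℝ) ^ n) ^ ((1 : ℝ) / 2) +
              M ^ ((3 : ℝ) / 2) / (r : ℝ) ^ ((1 : ℝ) / 2) + M) *
              ((r : ℝ) * M * (p : ℝ) ^ n) ^ ε := by
  obtain ⟨C, hC1, hC⟩ := exists_card_divisors_le_rpow (ε / 2) (by positivity)
  refine ⟨24 * C, by linarith, ?_⟩
  intro p hp _ n hn β₁ β₂ β₃ h₁ h₂ h₃ M hM1 hMq γ hγ a r hr hcop happ
  have hM0 : 0 ≤ M := by linarith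
  have hrR : (1 : ℝ) ≤ r := by exact_mod_cast hr
  have hq1 : (1 : ℝ) < (p : ℝ) ^ n := one_lt_pow₀ (by exact_mod_cast hp.one_lt) (by omega)
  have hcoprime : ∀ β : ℤ, ¬ (p : ℤ) ∣ β → IsCoprime (((p ^ n : ℕ) : ℤ)) β := fun β hβ => by
    push_cast
    exact ((Nat.prime_iff_prime_int.mp hp).coprime_iff_not_dvd.mpr hβ).pow_left
  have hqcast : ((((p ^ n : ℕ) : ℤ)) : ℝ) = (p : ℝ) ^ n := by push_cast; rfl
  set q : ℝ := (p : ℝ) ^ n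
  have hq0 : 0 < q := by linarith
  set N := ⌊M⌋₊
  have hNM : (N : ℝ) ≤ M := Nat.floor_le hM0
  have hN2 : (N : ℝ) ^ 2 ≤ M ^ 2 := by gcongr
  have hMlt : M ^ 2 < q := by
    have h1 : M < q ^ ((1 : ℝ) / 2) :=
      hMq.trans_lt (Real.rpow_lt_rpow_of_exponent_lt hq1 (by linarith))
    calc M ^ 2 < (q ^ ((1 : ℝ) / 2)) ^ 2 := by gcongr
      _ = q := by rw [← Real.sqrt_eq_rpow, Real.sq_sqrt hq0.le]
  have hNq : (N : ℤ) ^ 2 < ((p ^ n : ℕ) : ℤ) := by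
    have : (N : ℝ) ^ 2 < (p : ℝ) ^ n := hN2.trans_lt hMlt
    exact_mod_cast this
  set D : ℝ := C * M ^ ε with hD
  have hMε : 1 ≤ M ^ ε := Real.one_le_rpow hM1 hε.le
  have hD1 : 1 ≤ D := one_le_mul_of_one_le_of_one_le hC1 hMε
  have hK : ∀ k : ℕ, k ≠ 0 → k ≤ N ^ 2 → k.divisors.card ≤ ⌊D⌋₊ := by
    intro k hk0 hk
    refine Nat.le_floor ((hC k hk0).trans (mul_le_mul_of_nonneg_left ?_ (by linarith)))
    have hkM : (k : ℝ) ≤ M ^ 2 := le_trans (by exact_mod_cast hk) hN2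
    calc (k : ℝ) ^ (ε / 2) ≤ (M ^ 2) ^ (ε / 2) :=
          Real.rpow_le_rpow (by positivity) hkM (by positivity)
      _ = M ^ ε := by
          rw [← Real.rpow_natCast_mul hM0]; congr 1; push_cast; ring
  have hmain := sq_card_solutionTriples_le N ((p ^ n : ℕ) : ℤ) β₁ β₂ β₃ γ hNq (hcoprime _ h₁)
    (hcoprime _ h₂) (hcoprime _ h₃) (by push_cast; exact hγ) ⌊D⌋₊ hK
  have hP := card_congruencePairs_le (N ^ 2) ((p ^ n : ℕ) : ℤ) γ
    (lt_of_le_of_lt (by positivity) hNq) a r hr hcop (by rw [hqcast]; exact happ)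
  have hS := sigmaCount_le_card_solutionTriples p β₁ β₂ β₃ M hM0 (p ^ n)
  have hT := second_moment_main_le_sq hM1 (by linarith : (0 : ℝ) < r) hq0
  set T : ℝ := M ^ ((5 : ℝ) / 2) / q ^ ((1 : ℝ) / 2) + (r : ℝ) ^ ((1 : ℝ) / 2) *
    M ^ ((3 : ℝ) / 2) / q ^ ((1 : ℝ) / 2) + M ^ ((3 : ℝ) / 2) / (r : ℝ) ^ ((1 : ℝ) / 2) + M
  have hMT : M ≤ T := le_add_of_nonneg_left (by positivity)
  have hSR : (sigmaCount p β₁ β₂ β₃ M (p ^ n) : ℝ) ≤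
      ((solutionTriples N ((p ^ n : ℕ) : ℤ) β₁ β₂ β₃).card : ℝ) := by exact_mod_cast hS
  have hmainR : ((solutionTriples N ((p ^ n : ℕ) : ℤ) β₁ β₂ β₃).card : ℝ) ^ 2 ≤ (2 * N + 1) *
      (4 * ((solutionTriples N ((p ^ n : ℕ) : ℤ) β₁ β₂ β₃).card : ℝ) +
        8 * (⌊D⌋₊ : ℝ) ^ 2 * ((congruencePairs (N ^ 2) ((p ^ n : ℕ) : ℤ) γ).card : ℝ)) := by
    exact_mod_cast hmain
  rw [hqcast] at hP
  set S : ℝ := ((solutionTriples N ((p ^ n : ℕ) : ℤ) β₁ β₂ β₃).card : ℝ)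
  set P : ℝ := ((congruencePairs (N ^ 2) ((p ^ n : ℕ) : ℤ) γ).card : ℝ)
  have hS0 : 0 ≤ S := by positivity
  have hP' : P ≤ 6 * ((M ^ 2 / r + 1) * (r * M ^ 2 / q + 1)) := by
    push_cast at hP
    calc P ≤ (2 * (N : ℝ) ^ 2 / r + 2) * (2 * r * (N : ℝ) ^ 2 / q + 3) := hP
      _ ≤ (2 * M ^ 2 / r + 2) * (3 * r * M ^ 2 / q + 3) := by gcongr; norm_num
      _ = _ := by ring
  have hquad : S ^ 2 ≤ 12 * (D * T) * S + 144 * (D * T) ^ 2 := by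
    have hMDT : M ≤ D * T := hMT.trans (le_mul_of_one_le_left (hM0.trans hMT) hD1)
    calc S ^ 2 ≤ (2 * N + 1) * (4 * S + 8 * (⌊D⌋₊ : ℝ) ^ 2 * P) := hmainR
      _ ≤ (3 * M) * (4 * S + 8 * D ^ 2 * (6 * ((M ^ 2 / r + 1) * (r * M ^ 2 / q + 1)))) := by
          gcongr
          · linarith
          · exact Nat.floor_le (by linarith)
      _ = 12 * M * S + 144 * D ^ 2 * (M * ((M ^ 2 / r + 1) * (r * M ^ 2 / q + 1))) := by ring
      _ ≤ 12 * (D * T) * S + 144 * D ^ 2 * T ^ 2 := by gcongr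
      _ = _ := by ring
  have hDT : 0 < D * T := mul_pos (by linarith) (by linarith)
  have hfin : S ≤ 24 * (D * T) := le_of_sq_le_linear_add_sq hDT hquad
  calc (sigmaCount p β₁ β₂ β₃ M (p ^ n) : ℝ) ≤ 24 * (D * T) := hSR.trans hfin
    _ = 24 * C * T * M ^ ε := by rw [hD]; ring
    _ ≤ 24 * C * T * (r * M * q) ^ ε := by
        refine mul_le_mul_of_nonneg_left (Real.rpow_le_rpow hM0 ?_ hε.le)
          (mul_nonneg (by linarith) (by linarith))
        have h1 : M ≤ r * M := le_mul_of_one_le_left hM0 hrR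
        exact h1.trans (le_mul_of_one_le_right (by positivity) hq1.le)
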